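/- One has ∫_{v=-1}^{1} √( (1 − v)(1 + v²)/(1 + v) ) dv = 2√2 · E(1/2), where E(μ) = ∫₀^{π/2} √(1 − μ sin²θ) dθ is the complete elliptic integral of the second kind. -/

import Mathlib

/-!
Substituting `v = cos θ` turns the weight `√((1 - v) / (1 + v)) dv` into `(1 - cos θ) dθ`. The
remaining factor `√(1 + k v²)` is even in `v`, so the reflection `θ ↦ π - θ` cancels the
contribution of `cos θ` and folds the rest onto `[0, π / 2]`. There
`1 + k cos² θ = (1 + k) (1 - k / (1 + k) * sin² θ)`, which is the integrand of `ellipticE` at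
`k / (1 + k)`.
-/

open Real

/-- The complete elliptic integral of the second kind E(μ) = ∫₀^{π/2} √(1 − μ sin²θ) dθ. -/
noncomputable def ellipticE (μ : ℝ) : ℝ :=
  ∫ θ in (0 : ℝ)..(Real.pi / 2), Real.sqrt (1 - μ * Real.sin θ ^ 2)

lemma sqrt_one_sub_div_one_add {x : ℝ} (hx : x ≤ 1) :
    √((1 - x) / (1 + x)) = (1 - x) * √(1 - x ^ 2)⁻¹ := by
  have hx' : 0 ≤ 1 - x := sub_nonneg.mpr hx
  calc √((1 - x) / (1 + x)) = √((1 - x) ^ 2 * (1 - x ^ 2)⁻¹) := by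
        rw [show 1 - x ^ 2 = (1 - x) * (1 + x) by ring]
        rcases eq_or_ne (1 - x) 0 with h | h
        · simp [h]
        · congr 1
          field_simp
    _ = (1 - x) * √(1 - x ^ 2)⁻¹ := by rw [sqrt_mul (sq_nonneg _), sqrt_sq hx']

lemma integral_sqrt_one_sub_div_one_add_mul (g : ℝ → ℝ) :
    ∫ v in (-1)..1, √((1 - v) / (1 + v)) * g v = ∫ θ in 0..π, (1 - cos θ) * g (cos θ) := by
  rw [← Polynomial.Chebyshev.integral_measureT_eq_integral_cos (f := fun x ↦ (1 - x) * g x),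
    Polynomial.Chebyshev.integral_measureT]
  refine intervalIntegral.integral_congr fun v hv ↦ ?_
  rw [Set.uIcc_of_le (by norm_num)] at hv
  simp only [sqrt_one_sub_div_one_add hv.2]
  ring

section Parity

variable {E : Type*} [NormedAddCommGroup E] [NormedSpace ℝ E] {f : ℝ → E}

lemma integral_comp_cos_eq_zero_of_odd (hf : f.Odd) : ∫ θ in 0..π, f (cos θ) = 0 := by
  have reflect : ∫ θ in 0..π, f (cos θ) = -∫ θ in 0..π, f (cos θ) := by
    simpa [cos_pi_sub, hf.eq] using
      (intervalIntegral.integral_comp_sub_left (a := 0) (b := π) (fun θ ↦ f (cos θ)) π).symm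
  have : IsAddTorsionFree E := .of_isTorsionFree ℝ E
  exact self_eq_neg.mp reflect

lemma integral_one_sub_cos_smul_comp_cos_of_even (hf : f.Even)
    (hint : IntervalIntegrable (fun θ ↦ f (cos θ)) MeasureTheory.volume 0 π) :
    ∫ θ in 0..π, (1 - cos θ) • f (cos θ) = ∫ θ in 0..π, f (cos θ) := by
  have odd_part : ∫ θ in 0..π, cos θ • f (cos θ) = 0 :=
    integral_comp_cos_eq_zero_of_odd (f := fun x ↦ x • f x) fun x ↦ by simp [hf x]
  simp only [sub_smul, one_smul]
  rw [intervalIntegral.integral_sub hint (hint.continuousOn_smul continuous_cos.continuousOn),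
    odd_part, sub_zero]

lemma integral_comp_cos_of_even (hf : f.Even)
    (hint : IntervalIntegrable (fun θ ↦ f (cos θ)) MeasureTheory.volume 0 π) :
    ∫ θ in 0..π, f (cos θ) = (2 : ℝ) • ∫ θ in 0..π / 2, f (cos θ) := by
  have pi_div_two_mem : π / 2 ∈ Set.uIcc 0 π := by
    rw [Set.uIcc_of_le pi_pos.le]
    constructor <;> linarith [pi_pos]
  have reflect : ∫ θ in π / 2..π, f (cos θ) = ∫ θ in 0..π / 2, f (cos θ) := by
    simpa [cos_pi_sub, hf.eq, sub_half] using
      (intervalIntegral.integral_comp_sub_left (a := 0) (b := π / 2) (fun θ ↦ f (cos θ)) π).symm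
  rw [← intervalIntegral.integral_add_adjacent_intervals
      (hint.mono_set (Set.uIcc_subset_uIcc_left pi_div_two_mem))
      (hint.mono_set (Set.uIcc_subset_uIcc_right pi_div_two_mem)), reflect, two_smul]

end Parity

lemma integral_sqrt_one_add_mul_cos_sq {k : ℝ} (hk : -1 < k) :
    ∫ θ in 0..π / 2, √(1 + k * cos θ ^ 2) = √(1 + k) * ellipticE (k / (1 + k)) := by
  have hk' : 0 < 1 + k := by linarith
  rw [ellipticE, ← intervalIntegral.integral_const_mul]
  congr 1 with θ
  rw [← sqrt_mul hk'.le, cos_sq']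
  congr 1
  field_simp
  ring

theorem surface_area_element_integral_example_two_general {k : ℝ} (hk : -1 < k) :
    ∫ v in (-1)..1, √((1 - v) * (1 + k * v ^ 2) / (1 + v)) =
      2 * √(1 + k) * ellipticE (k / (1 + k)) := by
  set g : ℝ → ℝ := fun v ↦ √(1 + k * v ^ 2) with hg
  have g_even : g.Even := fun v ↦ by simp [hg]
  have g_cos_integrable :
      IntervalIntegrable (fun θ ↦ g (cos θ)) MeasureTheory.volume 0 π :=
    Continuous.intervalIntegrable (by fun_prop) _ _
  calc ∫ v in (-1)..1, √((1 - v) * (1 + k * v ^ 2) / (1 + v))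
      = ∫ v in (-1)..1, √((1 - v) / (1 + v)) * g v := by
        refine intervalIntegral.integral_congr fun v hv ↦ ?_
        rw [Set.uIcc_of_le (by norm_num)] at hv
        have radicand_nonneg : 0 ≤ 1 + k * v ^ 2 := by nlinarith [hv.1, hv.2, sq_nonneg v]
        simp only [hg, mul_div_right_comm, sqrt_mul' _ radicand_nonneg]
    _ = ∫ θ in 0..π, (1 - cos θ) * g (cos θ) := integral_sqrt_one_sub_div_one_add_mul g
    _ = ∫ θ in 0..π, g (cos θ) :=
        integral_one_sub_cos_smul_comp_cos_of_even g_even g_cos_integrable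
    _ = 2 * ∫ θ in 0..π / 2, g (cos θ) := integral_comp_cos_of_even g_even g_cos_integrable
    _ = 2 * √(1 + k) * ellipticE (k / (1 + k)) := by
        rw [integral_sqrt_one_add_mul_cos_sq hk, mul_assoc]

/-- ∫_{v=-1}^{1} √((1 − v)(1 + v²)/(1 + v)) dv = 2√2 · E(1/2). -/
theorem surface_area_element_integral_example_two :
    (∫ v in (-1 : ℝ)..1, Real.sqrt ((1 - v) * (1 + v ^ 2) / (1 + v))) =
      2 * Real.sqrt 2 * ellipticE (1 / 2) := by
  simpa [one_add_one_eq_two] using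
    surface_area_element_integral_example_two_general (k := 1) (by norm_num)
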